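/- (Fastest 1-periodic trajectory.) Let 𝒜 and ℬ be n×n matrices over the extended reals ℝ̄, let λ be a real number, and let x(0) ∈ ℝ̄^n be an eigenvector of 𝒜, i.e. 𝒜 ⊗ x(0) = λ + x(0) (entrywise). Then the trajectory x(k) = 𝒜^k ⊗ x(0) satisfies the upper-bound constraints x(k) ≤ ℬ ⊗' x(k-1) for all k ≥ 1 if and only if (ℬ^♯ ⊗ 𝒜)* ⊗ x(0) = x(0) (i.e. x(0) lies in the image of (ℬ^♯ ⊗ 𝒜)*). -/

import Mathlib

/-!
Max-plus addition of a fixed element is residuated by min-plus addition of its negative, at `±∞`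
as well thanks to the two absorbing conventions. Hence `A ⊗ ·` distributes over suprema and
commutes with shifts by a constant, and `y ≤ ℬ ⊗' x ↔ ℬ^♯ ⊗ y ≤ x`.

Each `x(k)` is a shift of the eigenvector `x(0)`, so every constraint follows from the one at
`k = 1`, which reads `(ℬ^♯ ⊗ 𝒜) ⊗ x(0) ≤ x(0)`. An inequality `C ⊗ x ≤ x` iterates to
`C^k ⊗ x ≤ x` for all `k`, which means `C* ⊗ x = x` because `C^0 ⊗ x = x`.
-/

noncomputable section

/-- Max-plus matrix product over the extended reals (`-∞` is absorbing for `+` in `EReal`). -/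
def mpMul {m n p : ℕ} (A : Matrix (Fin m) (Fin n) EReal) (B : Matrix (Fin n) (Fin p) EReal) :
    Matrix (Fin m) (Fin p) EReal :=
  fun i j => ⨆ k, A i k + B k j

/-- Max-plus matrix-vector product. -/
def mpMulVec {m n : ℕ} (A : Matrix (Fin m) (Fin n) EReal) (x : Fin n → EReal) :
    Fin m → EReal :=
  fun i => ⨆ k, A i k + x k

/-- Min-plus addition on `EReal`: `+∞` is absorbing. -/
def mnAdd (a b : EReal) : EReal := -((-a) + (-b))

/-- Min-plus matrix product. -/
def mnMul {m n p : ℕ} (A : Matrix (Fin m) (Fin n) EReal) (B : Matrix (Fin n) (Fin p) EReal) :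
    Matrix (Fin m) (Fin p) EReal :=
  fun i j => ⨅ k, mnAdd (A i k) (B k j)

/-- Min-plus matrix-vector product. -/
def mnMulVec {m n : ℕ} (A : Matrix (Fin m) (Fin n) EReal) (x : Fin n → EReal) :
    Fin m → EReal :=
  fun i => ⨅ k, mnAdd (A i k) (x k)

/-- Conjugate matrix: `(conj A) i j = -(A j i)`. -/
def conjM {m n : ℕ} (A : Matrix (Fin m) (Fin n) EReal) : Matrix (Fin n) (Fin m) EReal :=
  fun i j => -(A j i)

/-- Max-plus identity matrix. -/
def mpId (n : ℕ) : Matrix (Fin n) (Fin n) EReal :=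
  fun i j => if i = j then 0 else ⊥

/-- Min-plus identity matrix. -/
def mnId (n : ℕ) : Matrix (Fin n) (Fin n) EReal :=
  fun i j => if i = j then 0 else ⊤

/-- Max-plus matrix powers. -/
def mpPow {n : ℕ} (A : Matrix (Fin n) (Fin n) EReal) : ℕ → Matrix (Fin n) (Fin n) EReal
  | 0 => mpId n
  | k + 1 => mpMul A (mpPow A k)

/-- Min-plus matrix powers. -/
def mnPow {n : ℕ} (A : Matrix (Fin n) (Fin n) EReal) : ℕ → Matrix (Fin n) (Fin n) EReal
  | 0 => mnId n
  | k + 1 => mnMul A (mnPow A k)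

/-- Max-plus Kleene star: entrywise supremum of all max-plus powers. -/
def mpStar {n : ℕ} (A : Matrix (Fin n) (Fin n) EReal) : Matrix (Fin n) (Fin n) EReal :=
  fun i j => ⨆ k, mpPow A k i j

/-- Min-plus star: entrywise infimum of all min-plus powers. -/
def mnStar {n : ℕ} (A : Matrix (Fin n) (Fin n) EReal) : Matrix (Fin n) (Fin n) EReal :=
  fun i j => ⨅ k, mnPow A k i j

/-- Entrywise maximum of two matrices (`A ⊕ B`). -/
def mSup {m n : ℕ} (A B : Matrix (Fin m) (Fin n) EReal) : Matrix (Fin m) (Fin n) EReal :=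
  fun i j => A i j ⊔ B i j

section Residuation

variable {ι : Sort*}

theorem gc_add_mnAdd_neg (b : EReal) : GaloisConnection (b + ·) (mnAdd (-b)) := by
  intro a x
  -- Both sides say that the max-plus sum of `b`, `a` and `-x` is at most `0`.
  calc b + a ≤ x ↔ b + a - x ≤ 0 := EReal.sub_nonpos.symm
    _ ↔ a - mnAdd (-b) x ≤ 0 := by
      simp only [mnAdd, sub_eq_add_neg, neg_neg, add_assoc, add_left_comm]
    _ ↔ a ≤ mnAdd (-b) x := EReal.sub_nonpos

theorem ereal_add_iSup (b : EReal) (f : ι → EReal) : b + ⨆ k, f k = ⨆ k, b + f k :=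
  (gc_add_mnAdd_neg b).l_iSup

theorem ereal_iSup_add (f : ι → EReal) (b : EReal) : (⨆ k, f k) + b = ⨆ k, f k + b := by
  simp only [add_comm _ b, ereal_add_iSup]

end Residuation

section MulVec

variable {m n p : ℕ}

theorem mpMulVec_mpMul (A : Matrix (Fin m) (Fin n) EReal) (B : Matrix (Fin n) (Fin p) EReal)
    (x : Fin p → EReal) : mpMulVec (mpMul A B) x = mpMulVec A (mpMulVec B x) := by
  funext i
  simp only [mpMulVec, mpMul, ereal_iSup_add, ereal_add_iSup, add_assoc]
  exact iSup_comm

theorem mpMulVec_mpId (x : Fin n → EReal) : mpMulVec (mpId n) x = x := by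
  funext i
  have summand (k : Fin n) : mpId n i k + x k = ⨆ _ : k = i, x k := by
    obtain rfl | hk := eq_or_ne k i
    · simp [mpId]
    · simp [mpId, hk, hk.symm]
  simp only [mpMulVec, summand, iSup_iSup_eq_left]

theorem mpMulVec_mono (A : Matrix (Fin m) (Fin n) EReal) : Monotone (mpMulVec A) :=
  fun _ _ h _ => iSup_mono fun k => by gcongr; exact h k

theorem mpMulVec_const_add (A : Matrix (Fin m) (Fin n) EReal) (c : EReal) (x : Fin n → EReal) :
    mpMulVec A (fun i => c + x i) = fun i => c + mpMulVec A x i := by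
  funext i
  simp only [mpMulVec, ereal_add_iSup, add_left_comm]

theorem gc_mpMulVec_conjM_mnMulVec (B : Matrix (Fin m) (Fin n) EReal) :
    GaloisConnection (mpMulVec (conjM B)) (mnMulVec B) := by
  intro y x
  have entry (i : Fin m) (j : Fin n) : -B i j + y i ≤ x j ↔ y i ≤ mnAdd (B i j) (x j) := by
    simpa only [neg_neg] using gc_add_mnAdd_neg (-B i j) (y i) (x j)
  simp only [Pi.le_def, mnMulVec, mpMulVec, conjM, le_iInf_iff, iSup_le_iff, entry]
  exact forall_comm

theorem const_add_le_mnMulVec {B : Matrix (Fin m) (Fin n) EReal} {y : Fin m → EReal}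
    {x : Fin n → EReal} (h : y ≤ mnMulVec B x) (c : EReal) :
    (fun i => c + y i) ≤ mnMulVec B fun i => c + x i := by
  rw [← gc_mpMulVec_conjM_mnMulVec B _ _] at h ⊢
  rw [mpMulVec_const_add]
  intro i
  dsimp only
  gcongr
  exact h i

end MulVec

section Powers

variable {n : ℕ}

theorem mpMulVec_mpPow (A : Matrix (Fin n) (Fin n) EReal) (k : ℕ) (x : Fin n → EReal) :
    mpMulVec (mpPow A k) x = (mpMulVec A)^[k] x := by
  induction k with
  | zero => exact mpMulVec_mpId x
  | succ k ih => rw [mpPow, mpMulVec_mpMul, ih, Function.iterate_succ_apply']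

theorem mpMulVec_mpStar (C : Matrix (Fin n) (Fin n) EReal) (x : Fin n → EReal) :
    mpMulVec (mpStar C) x = ⨆ k, (mpMulVec C)^[k] x := by
  funext i
  simp only [← mpMulVec_mpPow, iSup_apply, mpMulVec, mpStar, ereal_iSup_add]
  exact iSup_comm

theorem mpMulVec_mpStar_eq_self_iff (C : Matrix (Fin n) (Fin n) EReal) (x : Fin n → EReal) :
    mpMulVec (mpStar C) x = x ↔ mpMulVec C x ≤ x := by
  rw [mpMulVec_mpStar]
  constructor
  · intro h
    calc mpMulVec C x ≤ ⨆ k, (mpMulVec C)^[k] x := le_iSup (fun k => (mpMulVec C)^[k] x) 1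
      _ = x := h
  · intro h
    have iterate_le (k : ℕ) : (mpMulVec C)^[k] x ≤ x :=
      (mpMulVec_mono C).antitone_iterate_of_map_le h (Nat.zero_le k)
    exact le_antisymm (iSup_le iterate_le) (le_iSup (fun k => (mpMulVec C)^[k] x) 0)

theorem iterate_mpMulVec_of_eigenvector {A : Matrix (Fin n) (Fin n) EReal} {c : EReal}
    {x : Fin n → EReal} (h : mpMulVec A x = fun i => c + x i) (k : ℕ) :
    (mpMulVec A)^[k] x = fun i => k • c + x i := by
  induction k with
  | zero => simp
  | succ k ih =>
    rw [Function.iterate_succ_apply', ih, mpMulVec_const_add, h]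
    simp only [succ_nsmul, add_assoc]

end Powers

theorem fastest_one_periodic_general {n : ℕ} (𝒜 ℬ : Matrix (Fin n) (Fin n) EReal)
    (lam : EReal) (x0 : Fin n → EReal) (heig : mpMulVec 𝒜 x0 = fun i => lam + x0 i) :
    (∀ k : ℕ, 1 ≤ k →
        mpMulVec (mpPow 𝒜 k) x0 ≤ mnMulVec ℬ (mpMulVec (mpPow 𝒜 (k - 1)) x0)) ↔
      mpMulVec (mpStar (mpMul (conjM ℬ) 𝒜)) x0 = x0 := by
  simp only [mpMulVec_mpPow]
  rw [mpMulVec_mpStar_eq_self_iff, mpMulVec_mpMul, gc_mpMulVec_conjM_mnMulVec ℬ _ _]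
  constructor
  · intro h
    exact h 1 le_rfl
  · intro first_constraint k hk
    obtain ⟨k, rfl⟩ := Nat.exists_eq_add_of_le' hk
    rw [Nat.add_sub_cancel, Function.iterate_succ_apply',
      iterate_mpMulVec_of_eigenvector heig, mpMulVec_const_add]
    exact const_add_le_mnMulVec first_constraint _

/-- fastest 1-periodic trajectory. -/
theorem fastest_one_periodic {n : ℕ} (𝒜 ℬ : Matrix (Fin n) (Fin n) EReal)
    (lam : ℝ) (x0 : Fin n → EReal)
    (heig : mpMulVec 𝒜 x0 = fun i => (lam : EReal) + x0 i) :
    (∀ k : ℕ, 1 ≤ k →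
        mpMulVec (mpPow 𝒜 k) x0 ≤ mnMulVec ℬ (mpMulVec (mpPow 𝒜 (k - 1)) x0)) ↔
      mpMulVec (mpStar (mpMul (conjM ℬ) 𝒜)) x0 = x0 :=
  fastest_one_periodic_general 𝒜 ℬ lam x0 heig
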